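/- Let a, b ∈ 𝒮(ℝ^{2n}) and define c ∈ 𝒮(ℝ^{2n}) by c(x,ξ) = a(x, ξ', 0) · b(x', 0, ξ). Then there exists C > 0 such that for all h ∈ (0,1] and all u ∈ 𝒮(ℝⁿ), ‖(Op_h^Λ(a) ∘ Op_h^Λ(b))u − Op_h^Λ(c)u‖_{L²(ℝⁿ)} ≤ C h^{1/2} ‖u‖_{L²(ℝⁿ)}. -/

import Mathlib

open MeasureTheory
open scoped RealInnerProductSpace

/-- Points of `ℝⁿ` (with `n = m + 1 ≥ 1`) are written `(x', xₙ)` with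
`x' ∈ ℝ^{n-1} = EuclideanSpace ℝ (Fin m)` and `xₙ ∈ ℝ`. -/
abbrev V (m : ℕ) : Type := EuclideanSpace ℝ (Fin m) × ℝ

/-- The quantization `Op_h^Λ(a)u(x) = (2πh)^{-n} ∫ e^{(i/h)(x'·ξ' - y·ξ)} a(x,ξ) u(y) dy dξ`. -/
noncomputable def OpL (m : ℕ) (h : ℝ) (a : V m × V m → ℂ) (u : V m → ℂ) (x : V m) : ℂ :=
  ((2 * Real.pi * h) ^ (m + 1))⁻¹ •
    ∫ p : V m × V m,
      Complex.exp (Complex.I *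
        Complex.ofReal ((⟪x.1, p.2.1⟫ - (⟪p.1.1, p.2.1⟫ + p.1.2 * p.2.2)) / h)) *
      a (x, p.2) * u p.1

noncomputable section

/-- The unimodular phase `e^{ir}`. -/
def ph (r : ℝ) : ℂ := Complex.exp (Complex.I * Complex.ofReal r)

lemma norm_ph (r : ℝ) : ‖ph r‖ = 1 := by
  unfold ph; rw [mul_comm]; exact Complex.norm_exp_ofReal_mul_I r

lemma ph_add (r s : ℝ) : ph (r + s) = ph r * ph s := by
  unfold ph; rw [← Complex.exp_add]; congr 1; push_cast; ring

lemma continuous_ph : Continuous ph := by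
  unfold ph; fun_prop

instance haarV (m : ℕ) : (volume : Measure (V m)).IsAddHaarMeasure :=
  Measure.prod.instIsAddHaarMeasure volume volume

/-- The standard bilinear form on `V m`. -/
def LL (m : ℕ) : V m →L[ℝ] V m →L[ℝ] ℝ :=
  (innerSL ℝ).bilinearComp (ContinuousLinearMap.fst ℝ _ _) (ContinuousLinearMap.fst ℝ _ _) +
  (ContinuousLinearMap.mul ℝ ℝ).bilinearComp (ContinuousLinearMap.snd ℝ _ _)
    (ContinuousLinearMap.snd ℝ _ _)

lemma LL_apply {m : ℕ} (v w : V m) : LL m v w = ⟪v.1, w.1⟫ + v.2 * w.2 := by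
  simp [LL]

lemma LL_self {m : ℕ} (v : V m) : ‖v‖ ^ 2 ≤ LL m v v := by
  rw [LL_apply, real_inner_self_eq_norm_sq, Prod.norm_def]
  rcases max_cases ‖v.1‖ ‖v.2‖ with h | h
  · rw [h.1]; nlinarith [mul_self_nonneg v.2]
  · rw [h.1, Real.norm_eq_abs, sq_abs]; nlinarith [sq_nonneg ‖v.1‖]

lemma continuous_LL (m : ℕ) : Continuous fun p : V m × V m => LL m p.1 p.2 :=
  (LL m).continuous₂

/-- Fourier transform on `V m`. -/
def FT {m : ℕ} (f : V m → ℂ) (w : V m) : ℂ :=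
  ∫ ξ : V m, ph (-(2 * Real.pi * LL m ξ w)) * f ξ

lemma char_eq_ph (r : ℝ) : ((Real.fourierChar r : Circle) : ℂ) = ph (2 * Real.pi * r) := by
  rw [Real.fourierChar_apply, ph, mul_comm]

lemma FT_eq {m : ℕ} (f : V m → ℂ) :
    FT f = VectorFourier.fourierIntegral Real.fourierChar volume (LL m).toLinearMap₁₂ f := by
  funext w
  unfold FT VectorFourier.fourierIntegral
  congr 1
  funext ξ
  rw [Circle.smul_def, char_eq_ph, smul_eq_mul]
  congr 2
  simp

/-- Japanese-bracket weight. -/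
def J {E : Type*} [NormedAddCommGroup E] (N : ℕ) (x : E) : ℝ := ((1 + ‖x‖) ^ N)⁻¹

lemma J_pos {E : Type*} [NormedAddCommGroup E] (N : ℕ) (x : E) : 0 < J N x := by
  unfold J; positivity

lemma J_le_one {E : Type*} [NormedAddCommGroup E] (N : ℕ) (x : E) : J N x ≤ 1 := by
  unfold J; apply inv_le_one_of_one_le₀; apply one_le_pow₀; linarith [norm_nonneg x]

lemma continuous_J {E : Type*} [NormedAddCommGroup E] (N : ℕ) : Continuous (J N : E → ℝ) := by
  unfold J
  refine Continuous.inv₀ (by fun_prop) (fun x => by positivity)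

lemma integrable_J {E : Type*} [NormedAddCommGroup E] [NormedSpace ℝ E] [FiniteDimensional ℝ E]
    [MeasurableSpace E] [BorelSpace E] (μ : Measure E) [μ.IsAddHaarMeasure] (N : ℕ)
    (hN : Module.finrank ℝ E < N) : Integrable (J N : E → ℝ) μ := by
  have := integrable_one_add_norm (μ := μ) (r := (N : ℝ)) (E := E) (by exact_mod_cast hN)
  refine this.congr (Filter.Eventually.of_forall fun x => ?_)
  simp only [J]
  rw [Real.rpow_neg (by positivity), Real.rpow_natCast]

lemma finrank_V (m : ℕ) : Module.finrank ℝ (V m) = m + 1 := by simp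

lemma integrable_JV (m N : ℕ) (hN : m + 1 < N) : Integrable (J N : V m → ℝ) :=
  integrable_J _ N (by rw [finrank_V]; exact hN)

/-- decay of the Fourier transform -/
lemma FT_decay (m N : ℕ) (hN : m + 1 < N) : ∃ C > 0, ∀ (f : V m → ℂ) (B : ℝ),
    ContDiff ℝ N f → (∀ q ≤ N, ∀ ξ, ‖iteratedFDeriv ℝ q f ξ‖ ≤ B * J N ξ) →
    ∀ w, ‖FT f w‖ ≤ C * B * J N w := by
  set K := ∫ ξ : V m, J N ξ with hK
  have hK0 : 0 ≤ K := integral_nonneg fun x => (J_pos N x).le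
  refine ⟨2 ^ N * (2 ^ N * ((N + 1) * K) + K) + 1, by positivity, ?_⟩
  intro f B hf hB w
  have hB0 : 0 ≤ B := by
    have := (norm_nonneg _).trans (hB 0 (Nat.zero_le _) 0)
    exact nonneg_of_mul_nonneg_left this (J_pos _ _)
  have hfint : ∀ q ≤ N, Integrable (fun ξ => ‖iteratedFDeriv ℝ q f ξ‖) := by
    intro q hq
    refine ((integrable_JV m N hN).const_mul B).mono' ?_ ?_
    · exact (hf.continuous_iteratedFDeriv (by exact_mod_cast hq)).norm.aestronglyMeasurable
    · filter_upwards with ξ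
      rw [norm_norm]; exact hB q hq ξ
  have hle : ∀ q ≤ N, ∫ ξ, ‖iteratedFDeriv ℝ q f ξ‖ ≤ B * K := by
    intro q hq
    rw [hK, ← integral_const_mul]
    exact integral_mono (hfint q hq) ((integrable_JV m N hN).const_mul B) (hB q hq)
  have key : ∀ n ≤ N, ‖w‖ ^ n * ‖FT f w‖ ≤ 2 ^ N * ((n + 1) * (B * K)) := by
    intro n hn
    have h1 := VectorFourier.pow_mul_norm_iteratedFDeriv_fourierIntegral_le (LL m) (K := 0)
      (N := (N : ℕ∞)) (μ := volume) (f := f) (by exact_mod_cast hf) (by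
        intro k q hk hq
        have : k = 0 := by simpa using hk
        subst this
        simpa using hfint q (by exact_mod_cast hq)) (k := 0) (n := n) le_rfl
        (by exact_mod_cast hn) w w
    rw [← FT_eq] at h1
    simp only [norm_iteratedFDeriv_zero, pow_zero, mul_one, one_mul, zero_add, CharP.cast_eq_zero,
      mul_zero, Finset.sum_product, Finset.range_one, Finset.sum_singleton] at h1
    have h2 : ∑ x ∈ Finset.range (n+1), ∫ v, ‖iteratedFDeriv ℝ x f v‖ ≤ (n + 1) * (B * K) := by
      calc _ ≤ ∑ x ∈ Finset.range (n+1), B * K := Finset.sum_le_sum fun q hq =>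
            hle q (by have := Finset.mem_range.1 hq; omega)
        _ = _ := by simp
    have h3 : (‖w‖ ^ 2) ^ n ≤ |LL m w w| ^ n := by
      gcongr; exact (LL_self w).trans (le_abs_self _)
    have h4 : ‖w‖ ^ n * (‖w‖ ^ n * ‖FT f w‖) ≤ ‖w‖ ^ n * (2 ^ N * ((n + 1) * (B * K))) := by
      calc ‖w‖ ^ n * (‖w‖ ^ n * ‖FT f w‖) = (‖w‖ ^ 2) ^ n * ‖FT f w‖ := by ring
        _ ≤ |LL m w w| ^ n * ‖FT f w‖ := by gcongr
        _ ≤ _ := h1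
        _ ≤ ‖w‖ ^ n * 2 ^ n * ((n + 1) * (B * K)) := by gcongr
        _ ≤ ‖w‖ ^ n * 2 ^ N * ((n + 1) * (B * K)) := by
            gcongr; norm_num
        _ = _ := by ring
    rcases eq_or_ne n 0 with rfl | hn0
    · simpa using h4
    · rcases eq_or_ne w 0 with rfl | hw
      · simp [hn0]; positivity
      · exact le_of_mul_le_mul_left h4 (by positivity)
  have hb0 : ‖FT f w‖ ≤ B * K := by
    unfold FT
    refine (norm_integral_le_integral_norm _).trans ?_
    refine le_trans (le_of_eq ?_) (hle 0 (Nat.zero_le _))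
    congr 1; funext ξ
    rw [norm_mul, norm_ph, one_mul, norm_iteratedFDeriv_zero]
  have hN' := key N le_rfl
  have hpow : (1 + ‖w‖) ^ N ≤ 2 ^ N * (1 + ‖w‖ ^ N) := by
    have h1 : 1 + ‖w‖ ≤ 2 * max 1 ‖w‖ := by
      have := le_max_left 1 ‖w‖; have := le_max_right 1 ‖w‖; linarith
    calc (1 + ‖w‖) ^ N ≤ (2 * max 1 ‖w‖) ^ N := by gcongr
      _ = 2 ^ N * (max 1 ‖w‖) ^ N := by rw [mul_pow]
      _ ≤ _ := by
        gcongr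
        rcases max_cases 1 ‖w‖ with h | h
        · rw [h.1]; simp
        · rw [h.1]; simp
  unfold J
  rw [← div_eq_mul_inv, le_div_iff₀ (by positivity)]
  calc ‖FT f w‖ * (1 + ‖w‖) ^ N ≤ ‖FT f w‖ * (2 ^ N * (1 + ‖w‖ ^ N)) := by gcongr
    _ = 2 ^ N * (‖w‖ ^ N * ‖FT f w‖ + ‖FT f w‖) := by ring
    _ ≤ 2 ^ N * (2 ^ N * ((N + 1) * (B * K)) + B * K) := by gcongr
    _ = (2 ^ N * (2 ^ N * ((N + 1) * K) + K)) * B := by ring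
    _ ≤ _ := by gcongr; linarith

lemma slice_deriv {m : ℕ} (a : SchwartzMap (V m × V m) ℂ) (x ξ : V m) (q : ℕ) :
    iteratedFDeriv ℝ q (fun ξ => a (x, ξ)) ξ =
      (iteratedFDeriv ℝ q a (x, ξ)).compContinuousLinearMap
        (fun _ => ContinuousLinearMap.inr ℝ (V m) (V m)) := by
  have h1 : (fun ξ : V m => a (x, ξ)) =
      (fun z => a ((x, 0) + z)) ∘ (ContinuousLinearMap.inr ℝ (V m) (V m)) := by
    funext ξ; simp
  have hs : ContDiff ℝ q (fun z : V m × V m => a ((x, 0) + z)) :=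
    (a.smooth q).comp (by fun_prop)
  rw [h1, ContinuousLinearMap.iteratedFDeriv_comp_right _ hs ξ le_rfl,
    iteratedFDeriv_comp_add_left]
  simp

lemma norm_comp_inr {m : ℕ} {q : ℕ} (T : ContinuousMultilinearMap ℝ (fun _ : Fin q => V m × V m) ℂ) :
    ‖T.compContinuousLinearMap (fun _ => ContinuousLinearMap.inr ℝ (V m) (V m))‖ ≤ ‖T‖ := by
  refine (ContinuousMultilinearMap.norm_compContinuousLinearMap_le _ _).trans ?_
  refine mul_le_of_le_one_right (norm_nonneg _) ?_
  refine Finset.prod_le_one (fun _ _ => norm_nonneg _) fun _ _ => ?_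
  exact ContinuousLinearMap.norm_inr_le_one ℝ _ _

lemma contDiff_slice {m : ℕ} (a : SchwartzMap (V m × V m) ℂ) (x : V m) (N : ℕ) :
    ContDiff ℝ N (fun ξ => a (x, ξ)) := (a.smooth N).comp (by fun_prop)

lemma schwartz_bound {m : ℕ} (a : SchwartzMap (V m × V m) ℂ) (N : ℕ) :
    ∃ C > 0, ∀ q ≤ N, ∀ x ξ : V m, ‖iteratedFDeriv ℝ q a (x, ξ)‖ ≤ C * J N x * J N ξ := by
  set C := 2 ^ (2 * N) * (Finset.Iic (2 * N, N)).sup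
    (fun m => SchwartzMap.seminorm ℝ m.1 m.2) a with hC
  refine ⟨|C| + 1, by positivity, ?_⟩
  intro q hq x ξ
  have h := SchwartzMap.one_add_le_sup_seminorm_apply (𝕜 := ℝ) (m := (2 * N, N)) (k := 2 * N)
    le_rfl hq a (x, ξ)
  rw [← hC] at h
  have h1 : (1 + ‖x‖) ^ N * (1 + ‖ξ‖) ^ N ≤ (1 + ‖(x, ξ)‖) ^ (2 * N) := by
    rw [two_mul, pow_add]
    have := norm_fst_le (x, ξ)
    have := norm_snd_le (x, ξ)
    gcongr
  unfold J
  rw [mul_assoc, ← mul_inv, ← div_eq_mul_inv, le_div_iff₀ (by positivity)]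
  calc _ ≤ ‖iteratedFDeriv ℝ q a (x, ξ)‖ * (1 + ‖(x, ξ)‖) ^ (2 * N) := by gcongr
    _ ≤ C := by rw [mul_comm]; exact h
    _ ≤ _ := by linarith [le_abs_self C]

/-- kernel -/
def ker {m : ℕ} (a : SchwartzMap (V m × V m) ℂ) (x w : V m) : ℂ := FT (fun ξ => a (x, ξ)) w

lemma ker_decay {m : ℕ} (a : SchwartzMap (V m × V m) ℂ) (N : ℕ) (hN : m + 1 < N) :
    ∃ C > 0, ∀ x w : V m, ‖ker a x w‖ ≤ C * J N x * J N w := by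
  obtain ⟨C, hC, h⟩ := FT_decay m N hN
  obtain ⟨B, hB, h'⟩ := schwartz_bound a N
  refine ⟨C * B, by positivity, fun x w => ?_⟩
  rw [mul_assoc C]
  refine h _ _ (contDiff_slice a x N) (fun q hq ξ => ?_) w
  rw [slice_deriv]
  exact (norm_comp_inr _).trans (h' q hq x ξ)

lemma integrable_slice {m : ℕ} (a : SchwartzMap (V m × V m) ℂ) (x : V m) :
    Integrable (fun ξ => a (x, ξ)) := by
  obtain ⟨B, hB, h'⟩ := schwartz_bound a (m + 2)
  refine ((integrable_JV m (m + 2) (by omega)).const_mul (B * J (m + 2) x)).mono'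
    (contDiff_slice a x 0).continuous.aestronglyMeasurable ?_
  filter_upwards with ξ
  simpa using h' 0 (by omega) x ξ

lemma integrable_ph {m : ℕ} {f : V m → ℂ} (hf : Integrable f) {g : V m → ℝ} (hg : Continuous g) :
    Integrable (fun ξ => ph (g ξ) * f ξ) := by
  refine (integrable_norm_iff ?_).1 ?_
  · exact ((continuous_ph.comp hg).aestronglyMeasurable).mul hf.1
  · simpa [norm_mul, norm_ph] using hf.norm

lemma ker_lip {m : ℕ} (a : SchwartzMap (V m × V m) ℂ) (N : ℕ) (hN : m + 1 < N) :
    ∃ C > 0, ∀ x y w : V m, ‖ker a x w - ker a y w‖ ≤ C * ‖x - y‖ * J N w := by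
  obtain ⟨C, hC, h⟩ := FT_decay m N hN
  obtain ⟨B, hB, h'⟩ := schwartz_bound a (N + 1)
  refine ⟨C * B, by positivity, fun x y w => ?_⟩
  have e1 : ker a x w - ker a y w = FT (fun ξ => a (x, ξ) - a (y, ξ)) w := by
    unfold ker FT
    have hg : Continuous fun ξ : V m => -(2 * Real.pi * LL m ξ w) := by fun_prop
    rw [← integral_sub (integrable_ph (integrable_slice a x) hg)
      (integrable_ph (integrable_slice a y) hg)]
    congr 1; funext ξ; ring
  rw [e1, mul_assoc C]
  refine h _ _ ((contDiff_slice a x N).sub (contDiff_slice a y N)) (fun q hq ξ => ?_) w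
  have e2 : iteratedFDeriv ℝ q (fun ξ => a (x, ξ) - a (y, ξ)) ξ =
      (iteratedFDeriv ℝ q a (x, ξ) - iteratedFDeriv ℝ q a (y, ξ)).compContinuousLinearMap
        (fun _ => ContinuousLinearMap.inr ℝ (V m) (V m)) := by
    have := iteratedFDeriv_sub_apply (𝕜 := ℝ) (i := q) (x := ξ) (contDiff_slice a x q).contDiffAt
      (contDiff_slice a y q).contDiffAt
    rw [slice_deriv, slice_deriv] at this
    refine Eq.trans this ?_
    ext v; simp
  rw [e2]
  refine (norm_comp_inr _).trans ?_
  have hd : ∀ z : V m × V m, HasFDerivAt (iteratedFDeriv ℝ q a)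
      (fderiv ℝ (iteratedFDeriv ℝ q a) z) z := fun z => by
    have : Differentiable ℝ (iteratedFDeriv ℝ q a) :=
      (a.smooth (q + 1)).differentiable_iteratedFDeriv (by exact_mod_cast Nat.lt_succ_self q)
    exact (this z).hasFDerivAt
  have mv := (convex_segment (y, ξ) (x, ξ)).norm_image_sub_le_of_norm_hasFDerivWithin_le
    (f := iteratedFDeriv ℝ q a) (f' := fderiv ℝ (iteratedFDeriv ℝ q a))
    (C := B * J N ξ) (fun z _ => (hd z).hasFDerivWithinAt) (fun z hz => by
      rw [norm_fderiv_iteratedFDeriv]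
      have hz2 : z = (z.1, ξ) := by
        obtain ⟨s, t, hs, ht, hst, rfl⟩ := hz
        ext1
        · rfl
        · simp [← add_smul, hst]
      rw [hz2]
      refine (h' (q + 1) (by omega) z.1 ξ).trans ?_
      have h1 := J_le_one (N + 1) z.1
      have h2 : J (N + 1) ξ ≤ J N ξ := by
        unfold J; gcongr
        · linarith [norm_nonneg ξ]
        · omega
      have := (J_pos (N + 1) z.1).le
      have := (J_pos (N + 1) ξ).le
      calc B * J (N + 1) z.1 * J (N + 1) ξ ≤ B * 1 * J N ξ := by gcongr
        _ = _ := by ring)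
    (left_mem_segment _ _ _) (right_mem_segment _ _ _)
  refine mv.trans (le_of_eq ?_)
  have : ‖(x, ξ) - (y, ξ)‖ = ‖x - y‖ := by simp [Prod.norm_def]
  rw [this]; ring

lemma ker_measurable {m : ℕ} (a : SchwartzMap (V m × V m) ℂ) :
    StronglyMeasurable (fun p : V m × V m => ker a p.1 p.2) := by
  unfold ker FT
  have : Continuous (fun q : (V m × V m) × V m =>
      ph (-(2 * Real.pi * LL m q.2 q.1.2)) * a (q.1.1, q.2)) := by
    have h1 : Continuous (fun q : (V m × V m) × V m => LL m q.2 q.1.2) :=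
      ((LL m).continuous.comp continuous_snd).clm_apply (continuous_snd.comp continuous_fst)
    have h2 : Continuous (fun q : (V m × V m) × V m => -(2 * Real.pi * LL m q.2 q.1.2)) :=
      (continuous_const.mul h1).neg
    have h3 : Continuous (fun q : (V m × V m) × V m => (q.1.1, q.2)) :=
      (continuous_fst.comp continuous_fst).prodMk continuous_snd
    exact (continuous_ph.comp h2).mul (a.continuous.comp h3)
  exact this.stronglyMeasurable.integral_prod_right

/-- the projection `x ↦ (x', 0)`. -/
def pr {m : ℕ} (x : V m) : V m := (x.1, 0)

/-- kernel form of the operator with phase base point `q` -/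
lemma kernel_form {m : ℕ} (f u : V m → ℂ) (hf : Integrable f) (hu : Integrable u) (q : V m) (h : ℝ)
    (hh : 0 < h) :
    ((2 * Real.pi * h) ^ (m + 1))⁻¹ • ∫ p : V m × V m, ph ((LL m q p.2 - LL m p.1 p.2) / h) *
      f p.2 * u p.1 = ∫ w, FT f w * u (q + (2 * Real.pi * h) • w) := by
  have hpi := Real.pi_pos
  have hfint : Integrable (fun p : V m × V m => ph ((LL m q p.2 - LL m p.1 p.2) / h) *
      f p.2 * u p.1) (volume.prod volume) := by
    have h1 : Integrable (fun p : V m × V m => u p.1 * f p.2) (volume.prod volume) :=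
      hu.mul_prod hf
    have h2 : Continuous (fun p : V m × V m => ph ((LL m q p.2 - LL m p.1 p.2) / h)) := by
      have := continuous_LL m
      exact continuous_ph.comp (by fun_prop)
    refine (h1.bdd_mul (c := 1) h2.aestronglyMeasurable ?_).congr ?_
    · filter_upwards with p; rw [norm_ph]
    · filter_upwards with p; ring
  rw [show (volume : Measure (V m × V m)) = volume.prod volume from rfl, integral_prod _ hfint]
  set G : V m → ℂ := fun y => ∫ ξ, ph ((LL m q ξ - LL m y ξ) / h) * f ξ * u y with hG
  have e1 : ∀ w, FT f w * u (q + (2 * Real.pi * h) • w) = G (q + (2 * Real.pi * h) • w) := by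
    intro w
    simp only [hG, FT]
    rw [integral_mul_const]
    congr 1
    congr 1; funext ξ
    congr 2
    have : LL m w ξ = LL m ξ w := by simp [LL_apply, real_inner_comm, mul_comm]
    simp only [map_add, map_smul, add_apply, smul_apply,
      this, smul_eq_mul]
    field_simp
    ring
  simp_rw [e1]
  rw [Measure.integral_comp_smul volume (fun z => G (q + z)), finrank_V,
    integral_add_left_eq_self, abs_of_pos (by positivity)]

lemma inversion {m : ℕ} (f : V m → ℂ) (hc : Continuous f) (hf : Integrable f)
    (hF : Integrable (FT f)) (η : V m) :
    ∫ w, FT f w * ph (2 * Real.pi * LL m w η) = f η := by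
  let E := WithLp 2 (V m)
  have hmp : MeasurePreserving (WithLp.ofLp : E → V m) volume volume :=
    WithLp.volume_preserving_ofLp _ _
  have hme : MeasurableEmbedding (WithLp.ofLp : E → V m) :=
    (MeasurableEquiv.toLp 2 (V m)).symm.measurableEmbedding
  let g : E → ℂ := f ∘ WithLp.ofLp
  have hgc : Continuous g := hc.comp (WithLp.prod_continuous_ofLp 2 _ _)
  have hg : Integrable g := (hmp.integrable_comp_emb hme).2 hf
  have inn : ∀ x y : E, ⟪x, y⟫ = LL m x.ofLp y.ofLp := by
    intro x y
    rw [WithLp.prod_inner_apply, LL_apply]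
    simp [mul_comm]
  have hFg : (FourierTransform.fourier g : E → ℂ) = (FT f) ∘ WithLp.ofLp := by
    funext w
    rw [Real.fourier_eq]
    simp only [Function.comp, FT]
    rw [← hmp.integral_comp hme]
    congr 1; funext ξ
    rw [Circle.smul_def, char_eq_ph, inn, smul_eq_mul, mul_neg]
    rfl
  have hFi : Integrable (FourierTransform.fourier g : E → ℂ) := by
    rw [hFg]; exact (hmp.integrable_comp_emb hme).2 hF
  have := congrFun (hgc.fourierInv_fourier_eq hg hFi) (WithLp.toLp 2 η)
  rw [hFg, Real.fourierInv_eq] at this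
  rw [← hmp.integral_comp hme]
  refine Eq.trans ?_ this
  congr 1; funext w
  rw [Circle.smul_def, char_eq_ph, inn, smul_eq_mul, mul_comm]
  rfl

lemma LL_pr {m : ℕ} (x ξ : V m) : LL m (pr x) ξ = LL m x (pr ξ) := by
  simp [LL_apply, pr]

lemma OpL_eq {m : ℕ} (a : SchwartzMap (V m × V m) ℂ) (u : V m → ℂ) (hu : Integrable u) (h : ℝ)
    (hh : 0 < h) (x : V m) :
    OpL m h a u x = ∫ w, ker a x w * u (pr x + (2 * Real.pi * h) • w) := by
  unfold ker
  rw [← kernel_form _ u (integrable_slice a x) hu (pr x) h hh]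
  unfold OpL ph
  congr 2
  funext p
  simp only [LL_apply, pr, zero_mul, add_zero]

lemma ker_slice_measurable {m : ℕ} (a : SchwartzMap (V m × V m) ℂ) (x : V m) :
    StronglyMeasurable (ker a x) := by
  have h1 : Measurable (fun w : V m => (x, w)) := measurable_prodMk_left
  have h2 := (ker_measurable a).comp_measurable h1
  exact h2

lemma ker_integrable {m : ℕ} (a : SchwartzMap (V m × V m) ℂ) (x : V m) :
    Integrable (ker a x) := by
  obtain ⟨C, hC, h⟩ := ker_decay a (m + 2) (by omega)
  refine ((integrable_JV m (m + 2) (by omega)).const_mul (C * J (m + 2) x)).mono'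
    (ker_slice_measurable a x).aestronglyMeasurable ?_
  filter_upwards with w using h x w

lemma ker_mul_integrable {m : ℕ} (a : SchwartzMap (V m × V m) ℂ) (x : V m) (g : V m → ℂ)
    (hg : StronglyMeasurable g) (M : ℝ) (hM : ∀ v, ‖g v‖ ≤ M) :
    Integrable (fun v => ker a x v * g v) :=
  (ker_integrable a x).mul_bdd (c := M) hg.aestronglyMeasurable (Filter.Eventually.of_forall hM)

lemma ker_mul_bound {m : ℕ} (a : SchwartzMap (V m × V m) ℂ) (M : ℝ) :
    ∃ C > 0, ∀ (x : V m) (g : V m → ℂ), StronglyMeasurable g → (∀ v, ‖g v‖ ≤ M) →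
    ‖∫ v, ker a x v * g v‖ ≤ C * J (m + 2) x := by
  obtain ⟨C, hC, h⟩ := ker_decay a (m + 2) (by omega)
  set K := ∫ v : V m, J (m + 2) v
  have hK : 0 ≤ K := integral_nonneg fun x => (J_pos _ x).le
  refine ⟨C * K * |M| + 1, by positivity, ?_⟩
  intro x g hg hM
  have hJ := J_pos (m + 2) x
  calc ‖∫ v, ker a x v * g v‖ ≤ ∫ v, C * J (m + 2) x * |M| * J (m + 2) v := by
        refine norm_integral_le_of_norm_le
          ((integrable_JV m (m + 2) (by omega)).const_mul _) ?_
        filter_upwards with v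
        rw [norm_mul]
        have h1 := h x v
        have h2 := (hM v).trans (le_abs_self M)
        calc _ ≤ C * J (m + 2) x * J (m + 2) v * |M| := by
              have := J_pos (m + 2) v
              gcongr
          _ = _ := by ring
    _ = C * K * |M| * J (m + 2) x := by rw [integral_const_mul]; ring
    _ ≤ _ := by gcongr; linarith

lemma continuous_pr (m : ℕ) : Continuous (pr : V m → V m) := by
  unfold pr; fun_prop

lemma schwartz_bdd {m : ℕ} (u : SchwartzMap (V m) ℂ) : ∃ M, ∀ v, ‖u v‖ ≤ M := by
  obtain ⟨C, hC⟩ := u.decay 0 0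
  exact ⟨C, fun v => by simpa using hC.2 v⟩

lemma OpL_measurable {m : ℕ} (b : SchwartzMap (V m × V m) ℂ) (u : SchwartzMap (V m) ℂ) (h : ℝ)
    (hh : 0 < h) : StronglyMeasurable (OpL m h b u) := by
  have e : OpL m h b u = fun x => ∫ w, ker b x w * u (pr x + (2 * Real.pi * h) • w) :=
    funext fun x => OpL_eq b u u.integrable h hh x
  rw [e]
  have h1 : Continuous fun p : V m × V m => u (pr p.1 + (2 * Real.pi * h) • p.2) := by
    have := continuous_pr m
    exact u.continuous.comp (by fun_prop)
  exact ((ker_measurable b).mul h1.stronglyMeasurable).integral_prod_right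

lemma OpL_bound {m : ℕ} (b : SchwartzMap (V m × V m) ℂ) (u : SchwartzMap (V m) ℂ) (h : ℝ)
    (hh : 0 < h) : ∃ C > 0, ∀ x, ‖OpL m h b u x‖ ≤ C * J (m + 2) x := by
  obtain ⟨M, hM⟩ := schwartz_bdd u
  obtain ⟨C, hC, H⟩ := ker_mul_bound b M
  refine ⟨C, hC, fun x => ?_⟩
  rw [OpL_eq b u u.integrable h hh x]
  refine H x _ ?_ (fun v => hM _)
  exact (u.continuous.comp (by fun_prop)).stronglyMeasurable

lemma OpL_integrable {m : ℕ} (b : SchwartzMap (V m × V m) ℂ) (u : SchwartzMap (V m) ℂ) (h : ℝ)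
    (hh : 0 < h) : Integrable (OpL m h b u) := by
  obtain ⟨C, hC, H⟩ := OpL_bound b u h hh
  exact ((integrable_JV m (m + 2) (by omega)).const_mul C).mono'
    (OpL_measurable b u h hh).aestronglyMeasurable (Filter.Eventually.of_forall H)

lemma pr_add {m : ℕ} (x w : V m) (t : ℝ) : pr (pr x + t • w) = pr x + t • pr w := by
  simp [pr]

lemma pr_pr {m : ℕ} (x : V m) : pr (pr x) = pr x := rfl

lemma comp_eq {m : ℕ} (a b : SchwartzMap (V m × V m) ℂ) (u : SchwartzMap (V m) ℂ) (h : ℝ)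
    (hh : 0 < h) (x : V m) :
    OpL m h a (OpL m h b u) x = ∫ w, ker a x w * ∫ v, ker b (pr x + (2 * Real.pi * h) • w) v *
      u (pr x + (2 * Real.pi * h) • pr w + (2 * Real.pi * h) • v) := by
  rw [OpL_eq a _ (OpL_integrable b u h hh) h hh]
  congr 1; funext w
  rw [OpL_eq b u u.integrable h hh, pr_add]

lemma c_eq {m : ℕ} (a b c : SchwartzMap (V m × V m) ℂ)
    (hc : ∀ x ξ : V m, c (x, ξ) = a (x, (ξ.1, (0:ℝ))) * b ((x.1, (0:ℝ)), ξ))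
    (u : SchwartzMap (V m) ℂ) (h : ℝ) (hh : 0 < h) (x : V m) :
    OpL m h c u x = ∫ w, ker a x w * ∫ v, ker b (pr x) v *
      u (pr x + (2 * Real.pi * h) • pr w + (2 * Real.pi * h) • v) := by
  have hpi := Real.pi_pos
  set k := ((2 * Real.pi * h) ^ (m + 1))⁻¹ with hk
  set Ψ : V m × V m → ℂ := fun p => ph ((LL m (pr x) p.2 - LL m p.1 p.2) / h) *
    b (pr x, p.2) * u p.1 with hΨ
  have hLLc := continuous_LL m
  have hΨi : Integrable Ψ (volume.prod volume) := by
    have h1 : Integrable (fun p : V m × V m => u p.1 * b (pr x, p.2)) (volume.prod volume) :=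
      u.integrable.mul_prod (integrable_slice b (pr x))
    have h2 : Continuous (fun p : V m × V m => ph ((LL m (pr x) p.2 - LL m p.1 p.2) / h)) :=
      continuous_ph.comp (by fun_prop)
    refine (h1.bdd_mul (c := 1) h2.aestronglyMeasurable ?_).congr ?_
    · filter_upwards with p; rw [norm_ph]
    · filter_upwards with p; simp only [hΨ]; ring
  have e1 : ∀ w, ∫ v, ker b (pr x) v *
      u (pr x + (2 * Real.pi * h) • pr w + (2 * Real.pi * h) • v) =
      k • ∫ p : V m × V m, ph (2 * Real.pi * LL m w (pr p.2)) * Ψ p := by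
    intro w
    unfold ker
    rw [← kernel_form _ u (integrable_slice b (pr x)) u.integrable _ h hh]
    congr 2
    funext p
    simp only [hΨ]
    rw [← mul_assoc, ← mul_assoc, ← ph_add]
    congr 3
    rw [← LL_pr]
    simp only [map_add, map_smul, add_apply, smul_apply, smul_eq_mul]
    field_simp
    ring
  simp_rw [e1]
  have hsw : Integrable (Function.uncurry fun (w : V m) (p : V m × V m) =>
      ker a x w * (ph (2 * Real.pi * LL m w (pr p.2)) * Ψ p))
      (volume.prod (volume.prod volume)) := by
    have h1 := (ker_integrable a x).mul_prod hΨi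
    have h2 : Continuous (fun q : V m × (V m × V m) => ph (2 * Real.pi * LL m q.1 (pr q.2.2))) := by
      have h3 : Continuous (fun q : V m × (V m × V m) => pr q.2.2) :=
        (continuous_pr m).comp (continuous_snd.comp continuous_snd)
      have h4 : Continuous (fun q : V m × (V m × V m) => LL m q.1 (pr q.2.2)) :=
        ((LL m).continuous.comp continuous_fst).clm_apply h3
      exact continuous_ph.comp (continuous_const.mul h4)
    refine (h1.bdd_mul (c := 1) h2.aestronglyMeasurable ?_).congr ?_
    · filter_upwards with p; rw [norm_ph]
    · filter_upwards with p; simp only [Function.uncurry]; ring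
  have e2 : ∀ w, ker a x w * (k • ∫ p : V m × V m, ph (2 * Real.pi * LL m w (pr p.2)) * Ψ p) =
      k • ∫ p : V m × V m, ker a x w * (ph (2 * Real.pi * LL m w (pr p.2)) * Ψ p) := by
    intro w
    rw [integral_const_mul, mul_smul_comm]
  simp_rw [e2]
  rw [integral_smul]
  rw [show (volume : Measure (V m × V m)) = volume.prod volume from rfl]
  rw [integral_integral_swap hsw]
  unfold OpL
  rw [show (volume : Measure (V m × V m)) = volume.prod volume from rfl]
  congr 2
  funext p
  have e3 : ∀ w, ker a x w * (ph (2 * Real.pi * LL m w (pr p.2)) * Ψ p) =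
      (FT (fun ξ => a (x, ξ)) w * ph (2 * Real.pi * LL m w (pr p.2))) * Ψ p := by
    intro w; unfold ker; ring
  simp_rw [e3]
  rw [integral_mul_const, inversion _ (contDiff_slice a x 0).continuous (integrable_slice a x)
    (ker_integrable a x), hc]
  simp only [hΨ, ph, LL_apply, pr, zero_mul, add_zero]
  ring

lemma diff_bound {m : ℕ} (a b c : SchwartzMap (V m × V m) ℂ)
    (hc : ∀ x ξ : V m, c (x, ξ) = a (x, (ξ.1, (0:ℝ))) * b ((x.1, (0:ℝ)), ξ)) :
    ∃ C > 0, ∀ h : ℝ, 0 < h → ∀ u : SchwartzMap (V m) ℂ, ∀ x,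
      ‖OpL m h a (OpL m h b u) x - OpL m h c u x‖ₑ ≤ ENNReal.ofReal (C * h) *
        (ENNReal.ofReal (J (m + 2) x) * ∫⁻ w : V m, ENNReal.ofReal (J (m + 2) w) *
          ∫⁻ v : V m, ENNReal.ofReal (J (m + 2) v) *
            ‖u (pr x + (2 * Real.pi * h) • pr w + (2 * Real.pi * h) • v)‖ₑ) := by
  have hpi := Real.pi_pos
  obtain ⟨A, hA, HA⟩ := ker_decay a (m + 3) (by omega)
  obtain ⟨B, hB, HB⟩ := ker_lip b (m + 2) (by omega)
  refine ⟨A * B * (2 * Real.pi), by positivity, ?_⟩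
  intro h hh u x
  obtain ⟨M, hM⟩ := schwartz_bdd u
  set t := 2 * Real.pi * h with ht
  have ht0 : 0 < t := by positivity
  have hgc : ∀ w : V m, StronglyMeasurable (fun v => u (pr x + t • pr w + t • v)) := fun w =>
    (u.continuous.comp (by fun_prop)).stronglyMeasurable
  have I : ∀ y w, Integrable (fun v => ker b y v * u (pr x + t • pr w + t • v)) := fun y w =>
    ker_mul_integrable b y _ (hgc w) M (fun v => hM _)
  obtain ⟨D, hD, HD⟩ := ker_mul_bound b M
  have HD' : ∀ y w, ‖∫ v, ker b y v * u (pr x + t • pr w + t • v)‖ ≤ D := fun y w =>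
    (HD y _ (hgc w) (fun v => hM _)).trans (mul_le_of_le_one_right hD.le (J_le_one _ _))
  have hpc := continuous_pr m
  have hj : Continuous fun p : V m × V m => u (pr x + t • pr p.1 + t • p.2) :=
    u.continuous.comp (by fun_prop)
  have m1 : StronglyMeasurable fun w => ∫ v, ker b (pr x + t • w) v *
      u (pr x + t • pr w + t • v) := by
    have : Continuous fun p : V m × V m => (pr x + t • p.1, p.2) := by fun_prop
    exact (((ker_measurable b).comp_measurable this.measurable).mul
      hj.stronglyMeasurable).integral_prod_right
  have m2 : StronglyMeasurable fun w => ∫ v, ker b (pr x) v *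
      u (pr x + t • pr w + t • v) := by
    have : Continuous fun p : V m × V m => (pr x, p.2) := by fun_prop
    exact (((ker_measurable b).comp_measurable this.measurable).mul
      hj.stronglyMeasurable).integral_prod_right
  rw [comp_eq a b u h hh x, c_eq a b c hc u h hh x, ← ht,
    ← integral_sub (ker_mul_integrable a x _ m1 D (fun w => HD' _ w))
      (ker_mul_integrable a x _ m2 D (fun w => HD' _ w))]
  refine (enorm_integral_le_lintegral_enorm _).trans ?_
  have mJ : ∀ (N : ℕ), Measurable (fun v : V m => ENNReal.ofReal (J N v)) := fun N =>
    (continuous_J N).measurable.ennreal_ofReal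
  have mu : Measurable (fun v : V m => ‖u v‖ₑ) := u.continuous.measurable.enorm
  have mm : Measurable fun w : V m => ENNReal.ofReal (J (m + 2) w) * ∫⁻ v : V m, ENNReal.ofReal (J (m + 2) v) *
            ‖u (pr x + t • pr w + t • v)‖ₑ := by
    refine (mJ _).mul ?_
    exact Measurable.lintegral_prod_right' (f := fun p : V m × V m => ENNReal.ofReal (J (m + 2) p.2) *
            ‖u (pr x + t • pr p.1 + t • p.2)‖ₑ)
      (((mJ _).comp measurable_snd).mul (hj.measurable.enorm))
  rw [← lintegral_const_mul _ mm, ← lintegral_const_mul _ (mm.const_mul _)]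
  refine lintegral_mono fun w => ?_
  rw [← mul_sub, ← integral_sub (I _ w) (I _ w), enorm_mul]
  have hin : ‖∫ v, (ker b (pr x + t • w) v * u (pr x + t • pr w + t • v) -
      ker b (pr x) v * u (pr x + t • pr w + t • v))‖ₑ ≤
      ENNReal.ofReal (B * (t * ‖w‖)) * ∫⁻ v : V m, ENNReal.ofReal (J (m + 2) v) *
            ‖u (pr x + t • pr w + t • v)‖ₑ := by
    refine (enorm_integral_le_lintegral_enorm _).trans ?_
    have m3 : Measurable fun v : V m => ENNReal.ofReal (J (m + 2) v) *
        ‖u (pr x + t • pr w + t • v)‖ₑ := (mJ _).mul ((hgc w).measurable.enorm)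
    rw [← lintegral_const_mul _ m3]
    refine lintegral_mono fun v => ?_
    rw [← sub_mul, enorm_mul, ← mul_assoc]
    gcongr
    rw [← ofReal_norm, ← ENNReal.ofReal_mul (by positivity)]
    refine ENNReal.ofReal_le_ofReal ((HB _ _ v).trans (le_of_eq ?_))
    rw [add_sub_cancel_left, norm_smul, Real.norm_eq_abs, abs_of_pos ht0]
  refine (mul_le_mul_right hin _).trans ?_
  generalize ∫⁻ v : V m, ENNReal.ofReal (J (m + 2) v) * ‖u (pr x + t • pr w + t • v)‖ₑ = X
  rw [← ofReal_norm, ← mul_assoc, ← mul_assoc (ENNReal.ofReal (J (m + 2) x)),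
    ← mul_assoc (ENNReal.ofReal (A * B * (2 * Real.pi) * h))]
  refine mul_le_mul' ?_ le_rfl
  have p1 := J_pos (m + 2) x
  have p2 := J_pos (m + 2) w
  have p3 := J_pos (m + 3) w
  rw [← ENNReal.ofReal_mul (norm_nonneg _), ← ENNReal.ofReal_mul p1.le,
    ← ENNReal.ofReal_mul (by positivity)]
  refine ENNReal.ofReal_le_ofReal ?_
  have s1 : J (m + 3) x ≤ J (m + 2) x := by
    unfold J; gcongr
    · linarith [norm_nonneg x]
    · omega
  have s2 : J (m + 3) w * ‖w‖ ≤ J (m + 2) w := by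
    unfold J
    rw [← div_eq_inv_mul, div_le_iff₀ (by positivity), pow_succ (n := m + 2),
      inv_mul_cancel_left₀ (by positivity)]
    linarith
  calc ‖ker a x w‖ * (B * (t * ‖w‖)) ≤ (A * J (m + 3) x * J (m + 3) w) * (B * (t * ‖w‖)) := by
        gcongr; exact HA x w
    _ = A * B * t * J (m + 3) x * (J (m + 3) w * ‖w‖) := by ring
    _ ≤ A * B * t * J (m + 2) x * J (m + 2) w := by gcongr
    _ = _ := by rw [ht]; ring

open scoped ENNReal

lemma cs {α : Type*} [MeasurableSpace α] (μ : Measure α) (k U : α → ℝ≥0∞) (hk : Measurable k)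
    (hU : Measurable U) :
    (∫⁻ x, k x * U x ∂μ) ^ 2 ≤ (∫⁻ x, k x ∂μ) * ∫⁻ x, k x * U x ^ 2 ∂μ := by
  have h := ENNReal.lintegral_mul_le_Lp_mul_Lq μ Real.HolderConjugate.two_two
    (f := fun x => k x ^ (1 / 2 : ℝ)) (g := fun x => k x ^ (1 / 2 : ℝ) * U x)
    (hk.pow_const _).aemeasurable ((hk.pow_const _).mul hU).aemeasurable
  have hs : ∀ z : ℝ≥0∞, z ^ (1 / 2 : ℝ) * z ^ (1 / 2 : ℝ) = z := fun z => by
    rw [← ENNReal.rpow_add_of_nonneg _ _ (by norm_num) (by norm_num)]; norm_num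
  have hs2 : ∀ z : ℝ≥0∞, (z ^ (1 / 2 : ℝ)) ^ 2 = z := fun z => by rw [pow_two, hs]
  simp only [Pi.mul_apply, ← mul_assoc, hs] at h
  simp only [ENNReal.rpow_two, mul_pow, hs2] at h
  calc _ ≤ ((∫⁻ x, k x ∂μ) ^ (1 / 2 : ℝ) * (∫⁻ x, k x * U x ^ 2 ∂μ) ^ (1 / 2 : ℝ)) ^ 2 := by
        gcongr
    _ = _ := by rw [mul_pow, hs2, hs2]

/-- ENNReal weight -/
def W {E : Type*} [NormedAddCommGroup E] (N : ℕ) (x : E) : ℝ≥0∞ := ENNReal.ofReal (J N x)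

lemma W_le_one {E : Type*} [NormedAddCommGroup E] (N : ℕ) (x : E) : W N x ≤ 1 := by
  unfold W; exact ENNReal.ofReal_le_one.2 (J_le_one N x)

lemma W_anti {E F : Type*} [NormedAddCommGroup E] [NormedAddCommGroup F] (N : ℕ) (x : E) (y : F)
    (h : ‖y‖ ≤ ‖x‖) : W N x ≤ W N y := by
  unfold W J; apply ENNReal.ofReal_le_ofReal; gcongr

lemma measurable_W {E : Type*} [NormedAddCommGroup E] [MeasurableSpace E] [BorelSpace E] (N : ℕ) :
    Measurable (W N : E → ℝ≥0∞) := (continuous_J N).measurable.ennreal_ofReal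

lemma lint_W {E : Type*} [NormedAddCommGroup E] [NormedSpace ℝ E] [FiniteDimensional ℝ E]
    [MeasurableSpace E] [BorelSpace E] (μ : Measure E) [μ.IsAddHaarMeasure] (N : ℕ)
    (hN : Module.finrank ℝ E < N) : ∫⁻ x : E, W N x ∂μ ≠ ∞ := by
  have := (integrable_J μ N hN).lintegral_lt_top
  exact this.ne

lemma swap3 {α : Type*} [MeasurableSpace α] (μ : Measure α) [SFinite μ] (F : α → α → α → ℝ≥0∞)
    (hmF : Measurable fun q : α × α × α => F q.1 q.2.1 q.2.2) :
    ∫⁻ x, ∫⁻ w, ∫⁻ v, F x w v ∂μ ∂μ ∂μ = ∫⁻ w, ∫⁻ v, ∫⁻ x, F x w v ∂μ ∂μ ∂μ := by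
  rw [lintegral_lintegral_swap]
  · congr 1; funext w
    have h1 : Measurable fun p : α × α => (p.1, w, p.2) :=
      measurable_fst.prodMk (measurable_const.prodMk measurable_snd)
    have h2 : Measurable (Function.uncurry fun x v => F x w v) := hmF.comp h1
    exact lintegral_lintegral_swap h2.aemeasurable
  · have : Measurable fun p : (α × α) × α => F p.1.1 p.1.2 p.2 :=
      hmF.comp ((measurable_fst.comp measurable_fst).prodMk
        ((measurable_snd.comp measurable_fst).prodMk measurable_snd))
    exact this.lintegral_prod_right'.aemeasurable

set_option maxHeartbeats 1000000 in
lemma L2est (m : ℕ) : ∃ K : ℝ≥0∞, K ≠ ∞ ∧ ∀ t : ℝ, 0 < t → ∀ U : V m → ℝ≥0∞, Measurable U →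
    ∫⁻ x : V m, (W (m + 2) x * ∫⁻ w : V m, W (m + 2) w * ∫⁻ v : V m, W (m + 2) v *
      U (pr x + t • pr w + t • v)) ^ 2 ≤ K * ENNReal.ofReal t⁻¹ * ∫⁻ x, U x ^ 2 := by
  set I := ∫⁻ w : V m, W (m + 2) w with hI
  set A := ∫⁻ s : ℝ, W (m + 2) s with hA
  set B := ∫⁻ s : EuclideanSpace ℝ (Fin m), W (m + 2) s with hB
  have hI' : I ≠ ∞ := lint_W _ _ (by rw [finrank_V]; omega)
  have hA' : A ≠ ∞ := lint_W _ _ (by simp)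
  have hB' : B ≠ ∞ := lint_W _ _ (by simp)
  refine ⟨I * I * (I * (A * B)), by finiteness, ?_⟩
  intro t ht U hU
  have mW : Measurable (W (m + 2) : V m → ℝ≥0∞) := measurable_W _
  have mA : Measurable (W (m + 2) : ℝ → ℝ≥0∞) := measurable_W _
  have mB : Measurable (W (m + 2) : EuclideanSpace ℝ (Fin m) → ℝ≥0∞) := measurable_W _
  have hprm : Measurable (pr : V m → V m) := (continuous_pr m).measurable
  have step1 : ∀ x : V m, (W (m + 2) x * ∫⁻ w : V m, W (m + 2) w * ∫⁻ v : V m, W (m + 2) v *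
      U (pr x + t • pr w + t • v)) ^ 2 ≤ I * I * ∫⁻ w : V m, ∫⁻ v : V m,
        W (m + 2) x.2 * (W (m + 2) w * (W (m + 2) v.1 * U (pr x + t • pr w + t • v) ^ 2)) := by
    intro x
    have m1 : Measurable fun p : V m × V m => U (pr x + t • pr p.1 + t • p.2) :=
      hU.comp (by fun_prop)
    have m2 : Measurable fun w : V m => ∫⁻ v : V m, W (m + 2) v * U (pr x + t • pr w + t • v) :=
      Measurable.lintegral_prod_right' (f := fun p : V m × V m => W (m + 2) p.2 *
        U (pr x + t • pr p.1 + t • p.2)) ((mW.comp measurable_snd).mul m1)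
    have m3 : ∀ w, Measurable fun v : V m => U (pr x + t • pr w + t • v) := fun w =>
      hU.comp (by fun_prop)
    have hx : W (m + 2) x ^ 2 ≤ W (m + 2) x.2 := by
      calc W (m + 2) x ^ 2 = W (m + 2) x * W (m + 2) x := pow_two _
        _ ≤ 1 * W (m + 2) x.2 := mul_le_mul' (W_le_one _ _) (W_anti _ _ _ (norm_snd_le x))
        _ = _ := one_mul _
    calc _ = W (m + 2) x ^ 2 * (∫⁻ w : V m, W (m + 2) w * ∫⁻ v : V m, W (m + 2) v *
              U (pr x + t • pr w + t • v)) ^ 2 := mul_pow _ _ _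
      _ ≤ W (m + 2) x.2 * (I * ∫⁻ w : V m, W (m + 2) w * (∫⁻ v : V m, W (m + 2) v *
              U (pr x + t • pr w + t • v)) ^ 2) := mul_le_mul' hx (cs _ _ _ mW m2)
      _ ≤ W (m + 2) x.2 * (I * ∫⁻ w : V m, W (m + 2) w * (I * ∫⁻ v : V m, W (m + 2) v.1 *
              U (pr x + t • pr w + t • v) ^ 2)) := by
          gcongr with w
          refine (cs _ _ _ mW (m3 w)).trans ?_
          gcongr with v
          exact W_anti _ _ _ (norm_fst_le v)
      _ = _ := by
          have m4 : Measurable fun p : V m × V m => W (m + 2) p.2.1 *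
              U (pr x + t • pr p.1 + t • p.2) ^ 2 :=
            (mB.comp (measurable_fst.comp measurable_snd)).mul (m1.pow_const 2)
          have m5 : Measurable fun w : V m => ∫⁻ v : V m, W (m + 2) v.1 *
              U (pr x + t • pr w + t • v) ^ 2 := m4.lintegral_prod_right'
          have m6 : ∀ w : V m, Measurable fun v : V m => W (m + 2) v.1 *
              U (pr x + t • pr w + t • v) ^ 2 := fun w =>
            (mB.comp measurable_fst).mul ((m3 w).pow_const 2)
          have e : ∀ w : V m, ∫⁻ v : V m, W (m + 2) x.2 * (W (m + 2) w * (W (m + 2) v.1 *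
              U (pr x + t • pr w + t • v) ^ 2)) = W (m + 2) x.2 * (W (m + 2) w *
                ∫⁻ v : V m, (W (m + 2) v.1 * U (pr x + t • pr w + t • v) ^ 2)) := fun w => by
            rw [lintegral_const_mul _ ((m6 w).const_mul _), lintegral_const_mul _ (m6 w)]
          have m7 : Measurable fun w : V m => W (m + 2) w * ∫⁻ v : V m, W (m + 2) v.1 *
              U (pr x + t • pr w + t • v) ^ 2 := mW.mul m5
          simp_rw [e]
          rw [lintegral_const_mul _ m7]
          have e2 : ∀ w : V m, W (m + 2) w * (I * ∫⁻ v : V m, W (m + 2) v.1 *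
              U (pr x + t • pr w + t • v) ^ 2) = I * (W (m + 2) w * ∫⁻ v : V m, W (m + 2) v.1 *
              U (pr x + t • pr w + t • v) ^ 2) := fun w => by ring
          simp_rw [e2]
          rw [lintegral_const_mul _ m7]
          ring
  have mF : Measurable fun q : V m × V m × V m => W (m + 2) q.1.2 * (W (m + 2) q.2.1 *
      (W (m + 2) q.2.2.1 * U (pr q.1 + t • pr q.2.1 + t • q.2.2) ^ 2)) := by
    have : Measurable fun q : V m × V m × V m => pr q.1 + t • pr q.2.1 + t • q.2.2 := by fun_prop
    have := hU.comp this
    exact (mA.comp (by fun_prop)).mul ((mW.comp (by fun_prop)).mul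
      ((mB.comp (by fun_prop)).mul (this.pow_const 2)))
  refine (lintegral_mono step1).trans ?_
  rw [lintegral_const_mul']
  swap
  · finiteness
  -- swap the order of integration
  set F : V m → V m → V m → ℝ≥0∞ := fun x w v => W (m + 2) x.2 * (W (m + 2) w *
    (W (m + 2) v.1 * U (pr x + t • pr w + t • v) ^ 2)) with hF
  have hmF : Measurable fun q : V m × V m × V m => F q.1 q.2.1 q.2.2 := mF
  have s1 : ∫⁻ x, ∫⁻ w, ∫⁻ v, F x w v = ∫⁻ w, ∫⁻ v, ∫⁻ x, F x w v := 
    swap3 volume F hmF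
  set Φ : ℝ → ℝ≥0∞ := fun s => ∫⁻ y : EuclideanSpace ℝ (Fin m), U (y, s) ^ 2 with hΦ
  have mU2 : Measurable fun z : V m => U z ^ 2 := hU.pow_const 2
  have mΦ : Measurable Φ := mU2.lintegral_prod_left'
  have s2 : ∀ w v, ∫⁻ x, F x w v = W (m + 2) w * (W (m + 2) v.1 * (A * Φ (t * v.2))) := by
    intro w v
    have mx : Measurable fun x : V m => U (pr x + t • pr w + t • v) ^ 2 :=
      (hU.comp (by fun_prop)).pow_const 2
    have e1 : ∀ x, F x w v = W (m + 2) w * (W (m + 2) v.1 * (W (m + 2) x.2 *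
        U (pr x + t • pr w + t • v) ^ 2)) := fun x => by simp only [hF]; ring
    simp_rw [e1]
    have mx2 : Measurable fun x : V m => W (m + 2) x.2 * U (pr x + t • pr w + t • v) ^ 2 :=
      (mA.comp measurable_snd).mul mx
    rw [lintegral_const_mul _ (mx2.const_mul _), lintegral_const_mul _ mx2]
    congr 2
    rw [show (volume : Measure (V m)) = volume.prod volume from rfl,
      lintegral_prod_symm _ mx2.aemeasurable]
    have e2 : ∀ s : ℝ, ∫⁻ y : EuclideanSpace ℝ (Fin m), W (m + 2) (y, s).2 *
        U (pr (y, s) + t • pr w + t • v) ^ 2 = W (m + 2) s * Φ (t * v.2) := by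
      intro s
      have e3 : ∀ y : EuclideanSpace ℝ (Fin m), U (pr (y, s) + t • pr w + t • v) ^ 2 =
          (fun y => U (y, t * v.2) ^ 2) (y + (t • w.1 + t • v.1)) := by
        intro y
        congr 2
        ext1
        · simp [pr, add_assoc]
        · simp [pr]
      simp_rw [e3]
      rw [lintegral_const_mul, lintegral_add_right_eq_self (fun y => U (y, t * v.2) ^ 2)]
      exact (hU.comp (by fun_prop)).pow_const 2
    simp_rw [e2]
    rw [lintegral_mul_const _ mA]
  have s3 : ∫⁻ s : ℝ, Φ (t * s) = ENNReal.ofReal t⁻¹ * ∫⁻ x, U x ^ 2 := by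
    rw [← lintegral_map mΦ (measurable_const_mul t), Real.map_volume_mul_left ht.ne',
      lintegral_smul_measure, abs_of_pos (by positivity), smul_eq_mul]
    congr 1
    rw [show (volume : Measure (V m)) = volume.prod volume from rfl,
      lintegral_prod_symm _ mU2.aemeasurable]
  have mΦt : Measurable fun s : ℝ => Φ (t * s) := mΦ.comp (measurable_const_mul t)
  have s4 : ∫⁻ v : V m, W (m + 2) v.1 * (A * Φ (t * v.2)) = B * (A * ∫⁻ s : ℝ, Φ (t * s)) := by
    rw [show (volume : Measure (V m)) = volume.prod volume from rfl,
      lintegral_prod_mul (f := fun y : EuclideanSpace ℝ (Fin m) => W (m + 2) y)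
        (g := fun s : ℝ => A * Φ (t * s)) mB.aemeasurable (mΦt.const_mul A).aemeasurable,
      lintegral_const_mul _ mΦt]
  rw [s1]
  simp_rw [s2]
  have mv : Measurable fun v : V m => W (m + 2) v.1 * (A * Φ (t * v.2)) :=
    (mB.comp measurable_fst).mul ((mΦt.comp measurable_snd).const_mul A)
  simp_rw [lintegral_const_mul _ mv]
  rw [lintegral_mul_const _ mW, s4, s3]
  refine le_of_eq ?_
  ring

end

/-- if `c(x,ξ) = a(x,ξ',0) b(x',0,ξ)` then
`‖(Op_h^Λ(a) ∘ Op_h^Λ(b))u − Op_h^Λ(c)u‖_{L²} ≤ C h^{1/2} ‖u‖_{L²}` for all `h ∈ (0,1]`. -/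
theorem stmt_5 (m : ℕ) (a b c : SchwartzMap (V m × V m) ℂ)
    (hc : ∀ x ξ : V m, c (x, ξ) = a (x, (ξ.1, (0:ℝ))) * b ((x.1, (0:ℝ)), ξ)) :
    ∃ C > 0, ∀ h : ℝ, 0 < h → h ≤ 1 → ∀ u : SchwartzMap (V m) ℂ,
      eLpNorm (fun x : V m => OpL m h ⇑a (OpL m h ⇑b ⇑u) x - OpL m h ⇑c ⇑u x) 2 volume ≤
        ENNReal.ofReal (C * h ^ ((1:ℝ)/2)) * eLpNorm (⇑u) 2 volume := by
  obtain ⟨C, hC, H⟩ := diff_bound a b c hc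
  obtain ⟨K, hK, HK⟩ := L2est m
  have hpi := Real.pi_pos
  refine ⟨C * (K.toReal * (2 * Real.pi)⁻¹) ^ ((1:ℝ)/2) + 1, by positivity, ?_⟩
  intro h hh _ u
  rw [eLpNorm_eq_lintegral_rpow_enorm_toReal (by norm_num) (by norm_num),
    eLpNorm_eq_lintegral_rpow_enorm_toReal (by norm_num) (by norm_num)]
  simp only [ENNReal.toReal_ofNat, ENNReal.rpow_two]
  set t := 2 * Real.pi * h with ht
  have ht0 : 0 < t := by positivity
  have mu : Measurable (fun v : V m => ‖u v‖ₑ) := u.continuous.measurable.enorm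
  have key : ∫⁻ x, ‖OpL m h a (OpL m h b u) x - OpL m h c u x‖ₑ ^ 2 ≤
      ENNReal.ofReal (C ^ 2 * h * (K.toReal * (2 * Real.pi)⁻¹)) * ∫⁻ x, ‖u x‖ₑ ^ 2 := by
    calc _ ≤ ∫⁻ x : V m, ENNReal.ofReal (C * h) ^ 2 * (W (m + 2) x * ∫⁻ w : V m, W (m + 2) w *
          ∫⁻ v : V m, W (m + 2) v * ‖u (pr x + t • pr w + t • v)‖ₑ) ^ 2 := by
          refine lintegral_mono fun x => ?_
          rw [← mul_pow]
          exact pow_le_pow_left' (H h hh u x) 2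
      _ = ENNReal.ofReal (C * h) ^ 2 * ∫⁻ x : V m, (W (m + 2) x * ∫⁻ w : V m, W (m + 2) w *
          ∫⁻ v : V m, W (m + 2) v * ‖u (pr x + t • pr w + t • v)‖ₑ) ^ 2 :=
          lintegral_const_mul' _ _ (by finiteness)
      _ ≤ ENNReal.ofReal (C * h) ^ 2 * (K * ENNReal.ofReal t⁻¹ * ∫⁻ x, ‖u x‖ₑ ^ 2) := by
          gcongr
          exact HK t ht0 _ mu
      _ = _ := by
          rw [← ENNReal.ofReal_toReal hK, ← mul_assoc, ENNReal.toReal_ofReal ENNReal.toReal_nonneg,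
            ← ENNReal.ofReal_mul ENNReal.toReal_nonneg, ← ENNReal.ofReal_pow (by positivity),
            ← ENNReal.ofReal_mul (by positivity)]
          congr 2
          rw [ht]
          field_simp
  refine (ENNReal.rpow_le_rpow key (by norm_num)).trans ?_
  rw [ENNReal.mul_rpow_of_nonneg _ _ (by norm_num), ENNReal.ofReal_rpow_of_nonneg (by positivity)
    (by norm_num)]
  gcongr
  have e : (C ^ 2 * h * (K.toReal * (2 * Real.pi)⁻¹)) ^ ((1:ℝ)/2) =
      C * (K.toReal * (2 * Real.pi)⁻¹) ^ ((1:ℝ)/2) * h ^ ((1:ℝ)/2) := by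
    rw [Real.mul_rpow (by positivity) (by positivity), Real.mul_rpow (by positivity) hh.le,
      ← Real.sqrt_eq_rpow, Real.sqrt_sq hC.le]
    ring
  rw [e]
  have := Real.rpow_nonneg hh.le ((1:ℝ)/2)
  nlinarith
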